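/- arXiv:0705.1171 — 2 statements merged into one kernel-verified Lean document; each statement's English description precedes it below -/
import Mathlib

section
/- Let A be a simple cusp algebra, let π be a primitive for A, and let n ≥ 0. Then multiplication by π maps A_n into A_{n+1} and maps A_{n+1} into A_{n+2}, and the induced linear map from E_n = A_n/A_{n+1} to E_{n+1} = A_{n+1}/A_{n+2} (sending the class of f to the class of π·f) is injective. -/
/-!
A primitive factors as `π = z² p` with `p` holomorphic and `p(0) = π''(0) / 2 = 1`
(`IsPrimitive.exists_eq`), so multiplication by `π` raises the order of vanishing at `0` by
exactly two. At least two is clear, and gives `π A_n ⊆ A_{n+1}`, as `A` is closed under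
multiplication. Conversely, if `f = z^{2n} g` and `π f = z^{2n+4} h`, cancelling `z^{2n+2}` gives
`p g = z² h`; since `p(0) ≠ 0`, `z²` divides `g` (`IsHolo.exists_eq_zfun_pow_mul`), that is,
`f ∈ A_{n+1}`. Division by `z` is provided by `dslope`, through the removable singularity theorem.
-/

open scoped Classical

noncomputable section

/-- The open unit disk in `ℂ`. -/
def 𝔻 : Set ℂ := Metric.ball 0 1

lemma zero_mem_disk : (0 : ℂ) ∈ 𝔻 := Metric.mem_ball_self one_pos

/-- The origin, as a point of the disk. -/
def d0 : 𝔻 := ⟨0, zero_mem_disk⟩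

/-- A function on the disk is holomorphic if it agrees on `𝔻` with a function
that is (complex) differentiable on `𝔻`. -/
def IsHolo (f : 𝔻 → ℂ) : Prop :=
  ∃ F : ℂ → ℂ, DifferentiableOn ℂ F 𝔻 ∧ ∀ z : 𝔻, f z = F z

/-- `O(𝔻)`: the algebra of all holomorphic functions on the disk. -/
def HolDisk : Subalgebra ℂ (𝔻 → ℂ) where
  carrier := {f | IsHolo f}
  mul_mem' := by
    rintro f g ⟨F, hF, hf⟩ ⟨G, hG, hg⟩
    exact ⟨F * G, hF.mul hG, fun z => by simp [hf z, hg z]⟩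
  add_mem' := by
    rintro f g ⟨F, hF, hf⟩ ⟨G, hG, hg⟩
    exact ⟨F + G, hF.add hG, fun z => by simp [hf z, hg z]⟩
  one_mem' := ⟨fun _ => 1, differentiableOn_const 1, fun _ => rfl⟩
  zero_mem' := ⟨fun _ => 0, differentiableOn_const 0, fun _ => rfl⟩
  algebraMap_mem' := fun c => ⟨fun _ => c, differentiableOn_const c, fun _ => rfl⟩

/-- The `j`-th complex derivative of a holomorphic function on the disk, at a
point `a` (junk value `0` for non-holomorphic functions).  This is well defined
on `𝔻` since any two extensions agree on the open set `𝔻`. -/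
def der (j : ℕ) (a : ℂ) (f : 𝔻 → ℂ) : ℂ :=
  if h : IsHolo f then iteratedDeriv j h.choose a else 0

/-- The `k`-th Taylor coefficient at `0` of a holomorphic function on the disk. -/
def taylorCoeff (k : ℕ) (f : 𝔻 → ℂ) : ℂ := der k 0 f / (Nat.factorial k : ℂ)

/-- The coordinate function `z` on the disk. -/
def zfun : 𝔻 → ℂ := fun z => (z : ℂ)

/-- `z^m O(𝔻)`, as a subspace of functions on the disk. -/
def zO (m : ℕ) : Submodule ℂ (𝔻 → ℂ) where
  carrier := {f | ∃ g, IsHolo g ∧ f = zfun ^ m * g}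
  add_mem' := by
    rintro f₁ f₂ ⟨g₁, hg₁, rfl⟩ ⟨g₂, hg₂, rfl⟩
    exact ⟨g₁ + g₂, add_mem (show g₁ ∈ HolDisk from hg₁) (show g₂ ∈ HolDisk from hg₂),
      by ring⟩
  zero_mem' := ⟨0, (HolDisk : Subalgebra ℂ (𝔻 → ℂ)).zero_mem, by simp⟩
  smul_mem' := by
    rintro c f ⟨g, hg, rfl⟩
    exact ⟨c • g, SMulMemClass.smul_mem c (show g ∈ HolDisk from hg), by
      ext z; simp [zfun]; ring⟩

/-- The quotient vector space `O(𝔻)/A`. -/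
abbrev OmodA (A : Subalgebra ℂ (𝔻 → ℂ)) :=
  HolDisk.toSubmodule ⧸ (A.toSubmodule.comap HolDisk.toSubmodule.subtype)

/-- `cod(A) = dim O(𝔻)/A`. -/
def cod (A : Subalgebra ℂ (𝔻 → ℂ)) : ℕ := Module.finrank ℂ (OmodA A)

/-- `ord(A) = min {k : z^{k+1} O(𝔻) ⊆ A}`. -/
def ord (A : Subalgebra ℂ (𝔻 → ℂ)) : ℕ :=
  sInf {k : ℕ | (zO (k + 1) : Set (𝔻 → ℂ)) ⊆ (A : Set (𝔻 → ℂ))}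

/-- `con(A) = max {n : f⁽ʲ⁾(0) = 0 for all f ∈ A and all 1 ≤ j ≤ n}`. -/
def con (A : Subalgebra ℂ (𝔻 → ℂ)) : ℕ :=
  sSup {n : ℕ | ∀ f ∈ A, ∀ j, 1 ≤ j → j ≤ n → der j 0 f = 0}

/-- A cusp algebra: a unital subalgebra of `O(𝔻)` of finite codimension
containing `z^m O(𝔻)` for some `m ≥ 2`. -/
def IsCuspAlgebra (A : Subalgebra ℂ (𝔻 → ℂ)) : Prop :=
  A ≤ HolDisk ∧ FiniteDimensional ℂ (OmodA A) ∧
    ∃ m, 2 ≤ m ∧ (zO m : Set (𝔻 → ℂ)) ⊆ (A : Set (𝔻 → ℂ))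

/-- A simple cusp algebra: a cusp algebra of contact one. -/
def IsSimpleCuspAlgebra (A : Subalgebra ℂ (𝔻 → ℂ)) : Prop :=
  IsCuspAlgebra A ∧ con A = 1

/-- A primitive for a simple cusp algebra:  `π ∈ A` with `π(0) = 0`,
`π'(0) = 0`, `π''(0) = 2`. -/
def IsPrimitive (A : Subalgebra ℂ (𝔻 → ℂ)) (π : 𝔻 → ℂ) : Prop :=
  π ∈ A ∧ π d0 = 0 ∧ der 1 0 π = 0 ∧ der 2 0 π = 2

/-- `A_n = A ∩ z^{2n} O(𝔻)`. -/
def An (A : Subalgebra ℂ (𝔻 → ℂ)) (n : ℕ) : Submodule ℂ (𝔻 → ℂ) :=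
  A.toSubmodule ⊓ zO (2 * n)

/-- `E_n = A_n / A_{n+1}`. -/
abbrev En (A : Subalgebra ℂ (𝔻 → ℂ)) (n : ℕ) :=
  An A n ⧸ ((An A (n + 1)).comap (An A n).subtype)

lemma disk_mem_nhds : 𝔻 ∈ nhds (0 : ℂ) := Metric.ball_mem_nhds 0 one_pos

lemma IsHolo.mul {f g : 𝔻 → ℂ} (hf : IsHolo f) (hg : IsHolo g) : IsHolo (f * g) :=
  HolDisk.mul_mem hf hg

/-- Derivatives at `0` may be computed from any holomorphic extension, not only from the one
selected in the definition of `der`. -/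
lemma der_eq {f : 𝔻 → ℂ} {F : ℂ → ℂ} (hF : DifferentiableOn ℂ F 𝔻) (hf : ∀ z : 𝔻, f z = F z)
    (j : ℕ) : der j 0 f = iteratedDeriv j F 0 := by
  have h : IsHolo f := ⟨F, hF, hf⟩
  rw [der, dif_pos h]
  apply Filter.EventuallyEq.iteratedDeriv_eq
  filter_upwards [disk_mem_nhds] with z hz
  rw [← hf ⟨z, hz⟩]
  exact (h.choose_spec.2 ⟨z, hz⟩).symm

lemma IsHolo.exists_eq_zfun_mul {g : 𝔻 → ℂ} (hg : IsHolo g) (h0 : g d0 = 0) :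
    ∃ k, IsHolo k ∧ g = zfun * k := by
  obtain ⟨G, hG, hgG⟩ := hg
  refine ⟨fun z => dslope G 0 z,
    ⟨dslope G 0, (Complex.differentiableOn_dslope disk_mem_nhds).2 hG, fun _ => rfl⟩, ?_⟩
  have hG0 : G 0 = 0 := (hgG d0).symm.trans h0
  ext z
  have := sub_smul_dslope G 0 (z : ℂ)
  simp only [sub_zero, hG0, smul_eq_mul] at this
  simp [zfun, this, hgG z]

/-- Cancellation of `z`: the two functions agree off `0` and hence, by continuity, at `0`. -/
lemma IsHolo.zfun_mul_cancel {u v : 𝔻 → ℂ} (hu : IsHolo u) (hv : IsHolo v)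
    (h : zfun * u = zfun * v) : u = v := by
  obtain ⟨U, hU, huU⟩ := hu
  obtain ⟨V, hV, hvV⟩ := hv
  have hne : ∀ z : 𝔻, (z : ℂ) ≠ 0 → u z = v z := fun z hz =>
    mul_left_cancel₀ hz (congrFun h z)
  have key : U 0 = V 0 := by
    have cU : Filter.Tendsto U (nhdsWithin 0 {0}ᶜ) (nhds (U 0)) :=
      ((hU.differentiableAt disk_mem_nhds).continuousAt).tendsto.mono_left nhdsWithin_le_nhds
    have cV : Filter.Tendsto V (nhdsWithin 0 {0}ᶜ) (nhds (V 0)) :=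
      ((hV.differentiableAt disk_mem_nhds).continuousAt).tendsto.mono_left nhdsWithin_le_nhds
    refine tendsto_nhds_unique (cU.congr' ?_) cV
    filter_upwards [mem_nhdsWithin_of_mem_nhds disk_mem_nhds, self_mem_nhdsWithin] with z hz hz0
    rw [← huU ⟨z, hz⟩, ← hvV ⟨z, hz⟩]
    exact hne ⟨z, hz⟩ hz0
  ext z
  by_cases hz : (z : ℂ) = 0
  · rw [huU, hvV, hz, key]
  · exact hne z hz

lemma IsHolo.zfun_pow_mul_cancel {u v : 𝔻 → ℂ} (hu : IsHolo u) (hv : IsHolo v) (m : ℕ)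
    (h : zfun ^ m * u = zfun ^ m * v) : u = v := by
  induction m generalizing u v with
  | zero => simpa using h
  | succ m ih =>
    have hz : IsHolo zfun := ⟨fun z => z, differentiableOn_id, fun _ => rfl⟩
    refine IsHolo.zfun_mul_cancel hu hv (ih (hz.mul hu) (hz.mul hv) ?_)
    linear_combination h

lemma der_one_zfun_mul {q : 𝔻 → ℂ} (hq : IsHolo q) : der 1 0 (zfun * q) = q d0 := by
  obtain ⟨Q, hQ, hqQ⟩ := hq
  rw [der_eq (F := fun z => z * Q z) (differentiableOn_id.mul hQ)
    (fun z => by simp [zfun, hqQ z]), iteratedDeriv_one, hqQ d0]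
  have h := (hasDerivAt_id (0 : ℂ)).mul (hQ.differentiableAt disk_mem_nhds).hasDerivAt
  exact h.deriv.trans (by simp [d0])

lemma der_two_zfun_sq_mul {p : 𝔻 → ℂ} (hp : IsHolo p) :
    der 2 0 (zfun ^ 2 * p) = 2 * p d0 := by
  obtain ⟨P, hP, hpP⟩ := hp
  rw [der_eq (F := fun z => z ^ 2 * P z) ((differentiableOn_id.pow 2).mul hP)
    (fun z => by simp [zfun, hpP z]), iteratedDeriv_succ, iteratedDeriv_one, hpP d0]
  have e : deriv (fun z => z ^ 2 * P z) =ᶠ[nhds 0] fun z => 2 * z * P z + z ^ 2 * deriv P z := by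
    filter_upwards [Metric.isOpen_ball.mem_nhds zero_mem_disk] with z hz
    have h := (hasDerivAt_pow 2 z).mul
      (hP.differentiableAt (Metric.isOpen_ball.mem_nhds hz)).hasDerivAt
    exact h.deriv.trans (by simp)
  rw [e.deriv_eq]
  have hP' : DifferentiableOn ℂ (deriv P) 𝔻 := hP.deriv Metric.isOpen_ball
  have h := (((hasDerivAt_id (0 : ℂ)).const_mul 2).mul
    (hP.differentiableAt disk_mem_nhds).hasDerivAt).add
    ((hasDerivAt_pow 2 (0 : ℂ)).mul (hP'.differentiableAt disk_mem_nhds).hasDerivAt)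
  exact h.deriv.trans (by simp [d0])

/-- A primitive is `z²` times a holomorphic function with value `1` at the origin. -/
lemma IsPrimitive.exists_eq {A : Subalgebra ℂ (𝔻 → ℂ)} {π : 𝔻 → ℂ} (hA : A ≤ HolDisk)
    (hπ : IsPrimitive A π) : ∃ p, IsHolo p ∧ p d0 = 1 ∧ π = zfun ^ 2 * p := by
  obtain ⟨hπA, h0, h1, h2⟩ := hπ
  obtain ⟨q, hq, rfl⟩ := IsHolo.exists_eq_zfun_mul (hA hπA) h0
  rw [der_one_zfun_mul hq] at h1
  obtain ⟨p, hp, rfl⟩ := hq.exists_eq_zfun_mul h1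
  have e : zfun * (zfun * p) = zfun ^ 2 * p := by ring
  rw [e, der_two_zfun_sq_mul hp] at h2
  exact ⟨p, hp, by linear_combination h2 / 2, e⟩

/-- A factor not vanishing at `0` does not contribute to the order of vanishing there. -/
lemma IsHolo.exists_eq_zfun_pow_mul {p g h : 𝔻 → ℂ} (hp : IsHolo p) (hp0 : p d0 ≠ 0)
    (hg : IsHolo g) (hh : IsHolo h) (m : ℕ) (e : p * g = zfun ^ m * h) :
    ∃ k, IsHolo k ∧ g = zfun ^ m * k := by
  induction m generalizing g with
  | zero => exact ⟨g, hg, by simp⟩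
  | succ m ih =>
    have hg0 : g d0 = 0 := by
      have h0 : p d0 * g d0 = 0 := (congrFun e d0).trans (by simp [zfun, d0])
      exact (mul_eq_zero.1 h0).resolve_left hp0
    obtain ⟨g₁, hg₁, rfl⟩ := hg.exists_eq_zfun_mul hg0
    have hz : IsHolo zfun := ⟨fun z => z, differentiableOn_id, fun _ => rfl⟩
    have hzm : IsHolo (zfun ^ m) := HolDisk.pow_mem hz m
    obtain ⟨k, hk, rfl⟩ := ih hg₁
      (IsHolo.zfun_mul_cancel (hp.mul hg₁) (hzm.mul hh) (by linear_combination e))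
    exact ⟨k, hk, by ring⟩

/-- Multiplication by a primitive `π` maps `A_n` into `A_{n+1}` and `A_{n+1}`
into `A_{n+2}`, and the induced linear map `E_n = A_n/A_{n+1} → E_{n+1} =
A_{n+1}/A_{n+2}` is injective.  (The third clause states exactly that the
induced map on the quotients has trivial kernel, i.e. is injective.) -/
theorem stmt_2 (A : Subalgebra ℂ (𝔻 → ℂ)) (hA : IsSimpleCuspAlgebra A)
    (π : 𝔻 → ℂ) (hπ : IsPrimitive A π) (n : ℕ) :
    (∀ f ∈ An A n, π * f ∈ An A (n + 1)) ∧
    (∀ f ∈ An A (n + 1), π * f ∈ An A (n + 2)) ∧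
    (∀ f ∈ An A n, π * f ∈ An A (n + 2) → f ∈ An A (n + 1)) := by
  obtain ⟨p, hp, hp0, hπp⟩ := hπ.exists_eq hA.1.1
  have step : ∀ m, ∀ f ∈ An A m, π * f ∈ An A (m + 1) := by
    rintro m f ⟨hfA, g, hg, hfg⟩
    refine ⟨A.mul_mem hπ.1 hfA, p * g, hp.mul hg, ?_⟩
    rw [hπp, hfg]
    ring
  refine ⟨step n, step (n + 1), ?_⟩
  rintro f ⟨hfA, g, hg, hfg⟩ ⟨-, h, hh, hfh⟩
  have hz2 : IsHolo (zfun ^ 2) :=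
    HolDisk.pow_mem (⟨fun z => z, differentiableOn_id, fun _ => rfl⟩ : IsHolo zfun) 2
  have e : p * g = zfun ^ 2 * h := by
    refine IsHolo.zfun_pow_mul_cancel (hp.mul hg) (hz2.mul hh) (2 * n + 2) ?_
    rw [hπp, hfg] at hfh
    linear_combination hfh
  obtain ⟨k, hk, hgk⟩ := hp.exists_eq_zfun_pow_mul (by simp [hp0]) hg hh 2 e
  refine ⟨hfA, k, hk, ?_⟩
  rw [hfg, hgk]
  ring

end
end

section
/- Let A be a simple cusp algebra and let n₀ ≥ 0 be the integer such that dim_ℂ(E_n) = 1 for all 0 ≤ n ≤ n₀ and dim_ℂ(E_n) = 2 for all n > n₀. Then ord(A) = 2n₀ + 1 and cod(A) = n₀ + 1. -/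
/-! The codimension of `A` and its order are both read off from the filtration `A_n`.

Every step `z^m O(𝔻) ⊇ z^(m+1) O(𝔻)` has codimension one (`relCodim_zO_succ`), so `E_n` embeds in
the two-dimensional space `z^(2n) O(𝔻) / z^(2n+2) O(𝔻)`. If `dim E_n = 2` and
`z^(2n+2) O(𝔻) ⊆ A`, then `z^(2n) O(𝔻) ⊆ A`. Descending from a large exponent gives
`z^(2n₀+2) O(𝔻) ⊆ A` (`zO_le_of_lt`), that is `ord A ≤ 2n₀ + 1`.

Conversely, contact one provides `π ∈ A` vanishing at the origin to order exactly two
(`IsSimpleCuspAlgebra.exists_order_two`). If `z^(2n₀+1) O(𝔻) ⊆ A`, adding the multiples of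
`π^(n₀)` yields `z^(2n₀) O(𝔻) ⊆ A` (`IsSimpleCuspAlgebra.zO_le_of_odd`), so `dim E_{n₀}` would be
`2`. Hence `ord A = 2n₀ + 1`.

For the codimension, let `N` be so large that `z^(2N) O(𝔻) ⊆ A`. Then `z^(2N) O(𝔻) = A_N` has
codimension `2N` in `O(𝔻)` and codimension `∑_{n<N} dim E_n = 2N - n₀ - 1` in `A`
(`relCodim_An`), and the difference is `n₀ + 1`. -/

open scoped Classical

noncomputable section

/-- Hadamard's division lemma: subtracting the value at the origin leaves a multiple of `z`. -/
lemma IsHolo.exists_eq_add {f : 𝔻 → ℂ} (hf : IsHolo f) :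
    ∃ g, IsHolo g ∧ f = f d0 • 1 + zfun * g := by
  obtain ⟨F, hF, hfF⟩ := hf
  refine ⟨fun z => dslope F 0 z,
    ⟨dslope F 0, (Complex.differentiableOn_dslope disk_mem_nhds).2 hF, fun _ => rfl⟩, ?_⟩
  ext z
  have := sub_smul_dslope F 0 (z : ℂ)
  simp only [sub_zero, smul_eq_mul] at this
  simp [zfun, this, hfF, d0]

lemma mem_zO_zero {f : 𝔻 → ℂ} : f ∈ zO 0 ↔ f ∈ HolDisk := by
  constructor
  · rintro ⟨g, hg, rfl⟩
    rwa [pow_zero, one_mul]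
  · intro hf
    exact ⟨f, hf, by simp⟩

lemma zO_anti {m n : ℕ} (h : m ≤ n) : zO n ≤ zO m := by
  rintro _ ⟨g, hg, rfl⟩
  have hz : IsHolo zfun := ⟨id, differentiableOn_id, fun _ => rfl⟩
  refine ⟨zfun ^ (n - m) * g, HolDisk.mul_mem (HolDisk.pow_mem hz _) hg, ?_⟩
  rw [← mul_assoc, ← pow_add, Nat.add_sub_cancel' h]

lemma zfun_pow_mem (m : ℕ) : zfun ^ m ∈ zO m := ⟨1, HolDisk.one_mem, by simp⟩

lemma zfun_pow_notMem (m : ℕ) : zfun ^ m ∉ zO (m + 1) := by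
  rintro ⟨g, ⟨G, hG, hgG⟩, h⟩
  have hc : ContinuousAt G 0 := (hG.differentiableAt disk_mem_nhds).continuousAt
  have h0 : Filter.Tendsto (fun z : ℂ => z * G z) (nhdsWithin 0 {0}ᶜ) (nhds (0 * G 0)) :=
    (continuousAt_id.mul hc).tendsto.mono_left nhdsWithin_le_nhds
  have h1 : Filter.Tendsto (fun z : ℂ => z * G z) (nhdsWithin 0 {0}ᶜ) (nhds 1) := by
    refine tendsto_const_nhds.congr' ?_
    filter_upwards [self_mem_nhdsWithin, mem_nhdsWithin_of_mem_nhds disk_mem_nhds] with z hz hzD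
    have hz0 : z ≠ 0 := hz
    have := congrFun h ⟨z, hzD⟩
    simp only [zfun, Pi.pow_apply, Pi.mul_apply, hgG, pow_succ, mul_assoc] at this
    exact mul_left_cancel₀ (pow_ne_zero m hz0) (by simpa using this)
  simpa using tendsto_nhds_unique h0 h1

/-- The first two derivatives at the origin, read off from a second order expansion. -/
lemma der_of_expansion {f g : 𝔻 → ℂ} {a b : ℂ} (hg : IsHolo g)
    (h : f = a • 1 + zfun * (b • 1 + zfun * g)) :
    der 1 0 f = b ∧ der 2 0 f = 2 * g d0 := by
  obtain ⟨G, hG, hgG⟩ := hg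
  have hf : IsHolo f :=
    ⟨fun z => a + z * (b + z * G z), by fun_prop, fun z => by simp [h, zfun, hgG]⟩
  have hev : hf.choose =ᶠ[nhds 0] fun z => a + z * (b + z * G z) := by
    filter_upwards [disk_mem_nhds] with z hz
    have := hf.choose_spec.2 ⟨z, hz⟩
    rw [← this]
    simp [h, zfun, hgG]
  have hA : AnalyticAt ℂ G 0 := hG.analyticAt disk_mem_nhds
  have hder : deriv (fun z => a + z * (b + z * G z)) =ᶠ[nhds 0]
      fun z => b + z * (2 * G z + z * deriv G z) := by
    filter_upwards [hA.eventually_analyticAt] with z hz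
    have hG' := hz.differentiableAt.hasDerivAt
    have := (((hasDerivAt_id z).mul (((hasDerivAt_id z).mul hG').const_add b))).const_add a
    refine (this.congr_deriv ?_).deriv
    simp only [id, Pi.mul_apply]
    ring
  constructor
  · rw [der, dif_pos hf, hev.iteratedDeriv_eq, iteratedDeriv_one, hder.eq_of_nhds]
    simp
  · rw [der, dif_pos hf, hev.iteratedDeriv_eq, iteratedDeriv_succ, iteratedDeriv_one,
      hder.deriv_eq]
    have hd0 : HasDerivAt (fun z => 2 * G z + z * deriv G z) _ 0 :=
      DifferentiableAt.hasDerivAt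
        ((hA.differentiableAt.const_mul 2).add
          (differentiableAt_id.mul hA.deriv.differentiableAt))
    have := ((hasDerivAt_id (0 : ℂ)).mul hd0).const_add b
    refine (this.congr_deriv ?_).deriv
    simp [hgG, d0]

/-! ### Relative codimension -/

/-- The relative codimension of `U` in `V` (that is, of `U ∩ V` in `V`), as an extended natural
number. Module length is used because it is additive without finiteness hypotheses. -/
def relCodim (U V : Submodule ℂ (𝔻 → ℂ)) : ℕ∞ :=
  Module.length ℂ (V ⧸ U.comap V.subtype)

lemma relCodim_add {U V W : Submodule ℂ (𝔻 → ℂ)} (hUV : U ≤ V) (hVW : V ≤ W) :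
    relCodim U W = relCodim U V + relCodim V W := by
  let f : (V ⧸ U.comap V.subtype) →ₗ[ℂ] (W ⧸ U.comap W.subtype) :=
    Submodule.mapQ _ _ (Submodule.inclusion hVW) (fun x hx => hx)
  let g : (W ⧸ U.comap W.subtype) →ₗ[ℂ] (W ⧸ V.comap W.subtype) :=
    Submodule.factor (Submodule.comap_mono hUV)
  refine Module.length_eq_add_of_exact f g ?_ (Submodule.factor_surjective _) ?_
  · rw [← LinearMap.ker_eq_bot, LinearMap.ker_eq_bot']
    intro x hx
    induction x using Submodule.Quotient.induction_on with
    | H x =>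
      have hxU := (Submodule.Quotient.mk_eq_zero (U.comap W.subtype)).1 hx
      exact (Submodule.Quotient.mk_eq_zero (U.comap V.subtype)).2 hxU
  · intro y
    induction y using Submodule.Quotient.induction_on with
    | H y =>
      constructor
      · intro hy
        have hyV : (y : 𝔻 → ℂ) ∈ V := (Submodule.Quotient.mk_eq_zero (V.comap W.subtype)).1 hy
        exact ⟨Submodule.Quotient.mk ⟨y, hyV⟩, rfl⟩
      · rintro ⟨x, hx⟩
        rw [← hx]
        induction x using Submodule.Quotient.induction_on with
        | H x => exact (Submodule.Quotient.mk_eq_zero (V.comap W.subtype)).2 x.2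

lemma le_of_relCodim_eq_zero {U V : Submodule ℂ (𝔻 → ℂ)} (h : relCodim U V = 0) : V ≤ U := by
  rw [relCodim, Module.length_eq_zero_iff, Submodule.Quotient.subsingleton_iff,
    Submodule.comap_subtype_eq_top] at h
  exact h

lemma relCodim_of_finrank {U V : Submodule ℂ (𝔻 → ℂ)} {d : ℕ} (hd : d ≠ 0)
    (h : Module.finrank ℂ (V ⧸ U.comap V.subtype) = d) : relCodim U V = d := by
  have := Module.finite_of_finrank_pos (R := ℂ) (by rw [h]; exact Nat.pos_of_ne_zero hd)
  rw [relCodim, Module.length_eq_finrank, h]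

lemma relCodim_zO_succ (m : ℕ) : relCodim (zO (m + 1)) (zO m) = 1 := by
  refine relCodim_of_finrank one_ne_zero
    (finrank_eq_one (Submodule.Quotient.mk ⟨zfun ^ m, zfun_pow_mem m⟩) ?_ ?_)
  · rw [Ne, Submodule.Quotient.mk_eq_zero]
    exact zfun_pow_notMem m
  · intro w
    induction w using Submodule.Quotient.induction_on with
    | H w =>
      obtain ⟨_, g, hg, rfl⟩ := w
      obtain ⟨k, hk, hgk⟩ := hg.exists_eq_add
      refine ⟨g d0, ?_⟩
      rw [← Submodule.Quotient.mk_smul, eq_comm, Submodule.Quotient.eq]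
      refine ⟨k, hk, ?_⟩
      change zfun ^ m * g - g d0 • zfun ^ m = _
      have hk' : g - g d0 • 1 = zfun * k := sub_eq_of_eq_add' hgk
      rw [pow_succ, mul_assoc, ← hk', mul_sub, mul_smul_comm, mul_one]

lemma relCodim_zO_add (m k : ℕ) : relCodim (zO (m + k)) (zO m) = k := by
  induction k with
  | zero =>
    rw [relCodim, add_zero, Nat.cast_zero, Module.length_eq_zero_iff,
      Submodule.Quotient.subsingleton_iff, Submodule.comap_subtype_eq_top]
  | succ k ih =>
    rw [← add_assoc, relCodim_add (zO_anti (Nat.le_succ _)) (zO_anti (Nat.le_add_right m k)),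
      ih, relCodim_zO_succ, Nat.cast_succ, add_comm]

/-! ### The filtration of a simple cusp algebra -/

lemma An_le_zO (A : Subalgebra ℂ (𝔻 → ℂ)) (n : ℕ) : An A n ≤ zO (2 * n) := inf_le_right

lemma An_anti (A : Subalgebra ℂ (𝔻 → ℂ)) (n : ℕ) : An A (n + 1) ≤ An A n :=
  inf_le_inf_left _ (zO_anti (by omega))

lemma An_eq_zO {A : Subalgebra ℂ (𝔻 → ℂ)} {n : ℕ} (h : zO (2 * n) ≤ A.toSubmodule) :
    An A n = zO (2 * n) := inf_eq_right.2 h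

lemma relCodim_zO_two_step (n : ℕ) : relCodim (zO (2 * (n + 1))) (zO (2 * n)) = 2 := by
  simpa [mul_add] using relCodim_zO_add (2 * n) 2

/-- A simple cusp algebra contains a function vanishing at the origin to order exactly two. -/
lemma IsSimpleCuspAlgebra.exists_order_two {A : Subalgebra ℂ (𝔻 → ℂ)}
    (hA : IsSimpleCuspAlgebra A) : ∃ g, IsHolo g ∧ g d0 ≠ 0 ∧ zfun ^ 2 * g ∈ A := by
  obtain ⟨⟨hle, -, -⟩, hcon⟩ := hA
  set S : Set ℕ := {n : ℕ | ∀ f ∈ A, ∀ j, 1 ≤ j → j ≤ n → der j 0 f = 0} with hS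
  have hcon : sSup S = 1 := hcon
  -- An unbounded set of naturals has supremum `0`, so `S` is bounded and attains its maximum `1`.
  have hbdd : BddAbove S := by
    by_contra hb
    rw [Nat.sSup_of_not_bddAbove hb] at hcon
    exact zero_ne_one hcon
  have h1S : 1 ∈ S := hcon ▸ Nat.sSup_mem ⟨0, fun f _ j h h' => by omega⟩ hbdd
  have h2S : 2 ∉ S := fun h => by
    have := le_csSup hbdd h
    omega
  simp only [hS, Set.mem_ofPred_eq, not_forall] at h2S
  obtain ⟨f, hf, j, hj1, hj2, hne⟩ := h2S
  have hd1 : der 1 0 f = 0 := h1S f hf 1 le_rfl le_rfl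
  have hj : j = 2 := by
    rcases (by omega : j = 1 ∨ j = 2) with rfl | rfl
    · exact absurd hd1 hne
    · rfl
  subst hj
  obtain ⟨g₁, hg₁, e₁⟩ := IsHolo.exists_eq_add (hle hf)
  obtain ⟨g, hg, e₂⟩ := hg₁.exists_eq_add
  have e : f = f d0 • 1 + zfun * (g₁ d0 • 1 + zfun * g) := by rw [← e₂]; exact e₁
  obtain ⟨hb, hc⟩ := der_of_expansion hg e
  refine ⟨g, hg, fun h0 => hne (by rw [hc, h0, mul_zero]), ?_⟩
  have : zfun ^ 2 * g = f - f d0 • 1 := by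
    rw [← hb, hd1, zero_smul, zero_add, ← mul_assoc, ← pow_two] at e
    exact (sub_eq_of_eq_add' e).symm
  rw [this]
  exact A.sub_mem hf (A.smul_mem A.one_mem _)

/-- If `dim E_k = 2` for all `k > n₀`, then `A` contains `z^(2n) O(𝔻)` as soon as `n > n₀`:
an induction downwards from an exponent at which this holds by the definition of a cusp algebra. -/
lemma zO_le_of_lt {A : Subalgebra ℂ (𝔻 → ℂ)} {n₀ N : ℕ} (hN : zO (2 * N) ≤ A.toSubmodule)
    (h2 : ∀ n, n₀ < n → Module.finrank ℂ (En A n) = 2) {n : ℕ} (hn : n₀ < n) (hnN : n ≤ N) :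
    zO (2 * n) ≤ A.toSubmodule := by
  induction hnN using Nat.decreasingInduction with
  | self => exact hN
  | of_succ n _ ih =>
    have hs : An A (n + 1) = zO (2 * (n + 1)) := An_eq_zO (ih (hn.trans n.lt_succ_self))
    have hE : relCodim (An A (n + 1)) (An A n) = 2 := relCodim_of_finrank two_ne_zero (h2 n hn)
    have hadd := relCodim_add (An_anti A n) (An_le_zO A n)
    rw [hE, hs, relCodim_zO_two_step] at hadd
    have h0 : relCodim (An A n) (zO (2 * n)) = 0 := by
      have : (2 : ℕ∞) + 0 = 2 + relCodim (An A n) (zO (2 * n)) := by rw [add_zero]; exact hadd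
      exact (ENat.add_right_injective_of_ne_top (by simp) this).symm
    exact (le_of_relCodim_eq_zero h0).trans inf_le_left

/-- The power `π ^ n` of a function `π ∈ A` of order two fills the gap between
`z^(2n+1) O(𝔻)` and `z^(2n) O(𝔻)`. -/
lemma IsSimpleCuspAlgebra.zO_le_of_odd {A : Subalgebra ℂ (𝔻 → ℂ)}
    (hA : IsSimpleCuspAlgebra A) {n : ℕ} (h : zO (2 * n + 1) ≤ A.toSubmodule) :
    zO (2 * n) ≤ A.toSubmodule := by
  obtain ⟨g, hg, hg0, hgA⟩ := hA.exists_order_two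
  rintro _ ⟨k, hk, rfl⟩
  set c : ℂ := k d0 / g d0 ^ n with hc
  have hr : IsHolo (k - c • g ^ n) :=
    HolDisk.sub_mem hk (HolDisk.smul_mem (HolDisk.pow_mem hg n) c)
  obtain ⟨r, hr, er⟩ := hr.exists_eq_add
  have hzero : (k - c • g ^ n) d0 = 0 := by
    simp [hc, div_mul_cancel₀ _ (pow_ne_zero n hg0)]
  rw [hzero, zero_smul, zero_add] at er
  have : zfun ^ (2 * n) * k = zfun ^ (2 * n + 1) * r + c • (zfun ^ 2 * g) ^ n := by
    rw [pow_succ, mul_assoc, ← er, mul_pow, ← pow_mul, mul_sub, mul_smul_comm, sub_add_cancel]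
  rw [this]
  exact A.add_mem (h ⟨r, hr, rfl⟩) (A.smul_mem (A.pow_mem hgA n) c)

/-- The codimension of `A_{n₀ + 1 + k}` in `A_0`, summed over the steps of the filtration:
`n₀ + 1` steps of dimension one, followed by `k` steps of dimension two. -/
lemma relCodim_An {A : Subalgebra ℂ (𝔻 → ℂ)} {n₀ : ℕ}
    (h1 : ∀ n ≤ n₀, Module.finrank ℂ (En A n) = 1)
    (h2 : ∀ n, n₀ < n → Module.finrank ℂ (En A n) = 2) (k : ℕ) :
    relCodim (An A (n₀ + 1 + k)) (An A 0) = ((n₀ + 1 + 2 * k : ℕ) : ℕ∞) := by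
  have hanti : Antitone (An A) := antitone_nat_of_succ_le (An_anti A)
  induction k with
  | zero =>
    suffices ∀ n ≤ n₀ + 1, relCodim (An A n) (An A 0) = (n : ℕ∞) from this _ le_rfl
    intro n
    induction n with
    | zero =>
      intro _
      rw [relCodim, Nat.cast_zero, Module.length_eq_zero_iff,
        Submodule.Quotient.subsingleton_iff, Submodule.comap_subtype_eq_top]
    | succ n ih =>
      intro hn
      rw [relCodim_add (An_anti A n) (hanti n.zero_le), ih (by omega),
        relCodim_of_finrank one_ne_zero (h1 n (by omega)), ← Nat.cast_add, add_comm]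
  | succ k ih =>
    rw [← add_assoc, relCodim_add (An_anti A _) (hanti (Nat.zero_le _)), ih,
      relCodim_of_finrank two_ne_zero (h2 (n₀ + 1 + k) (by omega)), ← Nat.cast_add]
    congr 1
    ring

/-- If `dim E_n = 1` for `n ≤ n₀` and `dim E_n = 2` for `n > n₀`, then
`ord(A) = 2n₀ + 1` and `cod(A) = n₀ + 1`. -/
theorem stmt_5 (A : Subalgebra ℂ (𝔻 → ℂ)) (hA : IsSimpleCuspAlgebra A)
    (n₀ : ℕ) (h1 : ∀ n ≤ n₀, Module.finrank ℂ (En A n) = 1)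
    (h2 : ∀ n, n₀ < n → Module.finrank ℂ (En A n) = 2) :
    ord A = 2 * n₀ + 1 ∧ cod A = n₀ + 1 := by
  have hA' := hA
  obtain ⟨⟨hle, hfin, m, -, hm⟩, -⟩ := hA'
  have hm : zO m ≤ A.toSubmodule := hm
  have hN : zO (2 * (n₀ + 1 + m)) ≤ A.toSubmodule := (zO_anti (by omega)).trans hm
  have hup : zO (2 * (n₀ + 1)) ≤ A.toSubmodule := zO_le_of_lt hN h2 (by omega) (by omega)
  constructor
  · have hmem : (2 * n₀ + 1) ∈ {k : ℕ | (zO (k + 1) : Set (𝔻 → ℂ)) ⊆ (A : Set (𝔻 → ℂ))} := hup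
    refine le_antisymm (Nat.sInf_le hmem) (le_csInf ⟨_, hmem⟩ fun k hk => ?_)
    by_contra! hlt
    have hk : zO (k + 1) ≤ A.toSubmodule := hk
    -- A smaller exponent would give `A ⊇ z^(2n₀) O(𝔻)`, hence `dim E_{n₀} = 2`.
    have hlow : zO (2 * n₀) ≤ A.toSubmodule :=
      hA.zO_le_of_odd ((zO_anti (by omega)).trans hk)
    have hE : relCodim (An A (n₀ + 1)) (An A n₀) = (1 : ℕ) :=
      relCodim_of_finrank one_ne_zero (h1 n₀ le_rfl)
    rw [An_eq_zO hlow, An_eq_zO hup, relCodim_zO_two_step] at hE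
    exact absurd hE (by norm_num)
  · have hA0 : An A 0 = A.toSubmodule :=
      inf_eq_left.2 fun f hf => mem_zO_zero.2 (hle hf)
    have hO : zO 0 = HolDisk.toSubmodule := Submodule.ext fun f => mem_zO_zero
    have htot := relCodim_zO_add 0 (2 * (n₀ + 1 + m))
    have hcodA := relCodim_An h1 h2 m
    have hcod : relCodim A.toSubmodule HolDisk.toSubmodule = cod A :=
      Module.length_eq_finrank ℂ (OmodA A)
    rw [hA0, An_eq_zO hN] at hcodA
    rw [zero_add, hO, relCodim_add hN hle, hcodA, hcod] at htot
    norm_cast at htot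
    omega

end
end
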